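/- Under the reduction hypotheses (invertible E, block form E·B = [H₁₁ H₁₂; 0 H₂₂] with H₁₁ of full row rank, E·t = (s̄₁, s̄₂)), there exist a : Fin q₁ → ZMod 2 and b : Fin q₂ → ZMod 2 with H₁.mulVec a + H₂.mulVec b = s̄ and v ⬝ᵥ a = 1 (i.e., an associated polynomial determining a unique inverse exists) if and only if rank H₂₂ = rank [H₂₂ | s̄₂], where [H₂₂ | s̄₂] is H₂₂ augmented with s̄₂ as an extra column. Moreover, for every b with H₂₂.mulVec b = s̄₂ there exists a such that (a,b) solves the combined system. -/

import Mathlib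

open scoped Matrix

/-!
Left multiplication by the invertible matrix `E` does not change the solution set, so `(a, b)`
solves the combined system `B (a, b) = t` iff `H₁₁ a + H₁₂ b = s₁` and `H₂₂ b = s₂`
(`system_iff_reduced`). As `H₁₁` has full row rank, it is surjective, so for every `b` the first
equation can be solved for `a`. Hence solvability comes down to that of `H₂₂ b = s₂`, which the
Rouché–Capelli criterion (`exists_mulVec_eq_iff_rank_eq`) expresses through ranks.
-/

/-- Rouché–Capelli: the augmented column space contains the column space of `A`, so the two ranks
agree iff these spaces coincide, that is, iff `s` lies in the column space of `A`. -/
lemma exists_mulVec_eq_iff_rank_eq {K : Type*} [Field K] {m n : ℕ}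
    (A : Matrix (Fin m) (Fin n) K) (s : Fin m → K) :
    (∃ b, A.mulVec b = s) ↔
      A.rank = (Matrix.of fun i : Fin m => Fin.snoc (A i) (s i) :
        Matrix (Fin m) (Fin (n + 1)) K).rank := by
  set C : Matrix (Fin m) (Fin (n + 1)) K := Matrix.of fun i => Fin.snoc (A i) (s i) with hC
  have hmul : ∀ x : Fin (n + 1) → K,
      C.mulVec x = A.mulVec (fun j => x j.castSucc) + x (Fin.last n) • s := by
    intro x
    ext i
    simp [hC, Matrix.mulVec, dotProduct, Fin.sum_univ_castSucc, mul_comm]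
  have hle : LinearMap.range A.mulVecLin ≤ LinearMap.range C.mulVecLin := by
    rintro _ ⟨b, rfl⟩
    refine ⟨Fin.snoc b 0, ?_⟩
    simp [hmul]
  constructor
  · rintro ⟨b, hb⟩
    have hge : LinearMap.range C.mulVecLin ≤ LinearMap.range A.mulVecLin := by
      rintro _ ⟨x, rfl⟩
      refine ⟨(fun j => x j.castSucc) + x (Fin.last n) • b, ?_⟩
      simp [hmul, Matrix.mulVec_add, Matrix.mulVec_smul, hb]
    unfold Matrix.rank
    rw [le_antisymm hle hge]
  · intro h
    have heq := Submodule.eq_of_le_of_finrank_eq hle h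
    have hs : s ∈ LinearMap.range C.mulVecLin := by
      refine ⟨Fin.snoc 0 1, ?_⟩
      simp only [Matrix.mulVecLin_apply, hmul, Fin.snoc_castSucc, Fin.snoc_last, one_smul,
        add_eq_right]
      exact A.mulVec_zero
    rw [← heq] at hs
    exact hs

lemma mulVec_surjective_of_rank_eq {K : Type*} [Field K] {m n : ℕ}
    (A : Matrix (Fin m) (Fin n) K) (h : A.rank = m) : Function.Surjective A.mulVec := by
  have htop : LinearMap.range A.mulVecLin = ⊤ := by
    apply Submodule.eq_top_of_finrank_eq
    rw [Module.finrank_fin_fun]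
    exact h
  exact LinearMap.range_eq_top.mp htop

/-- A block matrix with its indices renumbered acts blockwise on a concatenated vector. -/
lemma reindex_fromBlocks_mulVec_append {K : Type*} [Field K] {k l m n r : ℕ} (h : k + l = r)
    (P : Matrix (Fin k) (Fin m) K) (Q : Matrix (Fin k) (Fin n) K)
    (R : Matrix (Fin l) (Fin m) K) (S : Matrix (Fin l) (Fin n) K)
    (a : Fin m → K) (b : Fin n → K) :
    (Matrix.reindex (finSumFinEquiv.trans (finCongr h)) finSumFinEquiv
      (Matrix.fromBlocks P Q R S)).mulVec (Fin.append a b) =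
    fun i => Fin.append (P.mulVec a + Q.mulVec b) (R.mulVec a + S.mulVec b)
      ((finCongr h).symm i) := by
  subst h
  ext i
  refine Fin.addCases (fun i => ?_) (fun i => ?_) i <;>
    simp [Matrix.mulVec, dotProduct, Fin.sum_univ_add]

lemma append_eq_append_iff {K : Type*} {m n : ℕ} (a c : Fin m → K) (b d : Fin n → K) :
    Fin.append a b = Fin.append c d ↔ a = c ∧ b = d := by
  constructor
  · intro h
    constructor
    · ext i
      simpa using congrFun h (Fin.castAdd n i)
    · ext i
      simpa using congrFun h (Fin.natAdd m i)
  · rintro ⟨rfl, rfl⟩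
    rfl

/-- Row reduction by an invertible `E` preserves the solution set of the combined system. -/
lemma system_iff_reduced {K : Type*} [Field K] (p q₁ q₂ p₁ p₂ : ℕ) (hp : p₁ + p₂ = p + 1)
    (H₁ : Matrix (Fin p) (Fin q₁) K) (H₂ : Matrix (Fin p) (Fin q₂) K)
    (v : Fin q₁ → K) (sbar : Fin p → K)
    (H₁₁ : Matrix (Fin p₁) (Fin q₁) K) (H₁₂ : Matrix (Fin p₁) (Fin q₂) K)
    (H₂₂ : Matrix (Fin p₂) (Fin q₂) K)
    (s₁ : Fin p₁ → K) (s₂ : Fin p₂ → K)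
    (B : Matrix (Fin (p + 1)) (Fin (q₁ + q₂)) K)
    (hB : B = Matrix.reindex finSumFinEquiv finSumFinEquiv
      (Matrix.fromBlocks H₁ H₂ (Matrix.of fun (_ : Fin 1) j => v j) 0))
    (t : Fin (p + 1) → K)
    (ht : t = Fin.append sbar (fun _ : Fin 1 => (1 : K)))
    (E : Matrix (Fin (p + 1)) (Fin (p + 1)) K) (hE : IsUnit E)
    (hEB : E * B = Matrix.reindex (finSumFinEquiv.trans (finCongr hp)) finSumFinEquiv
      (Matrix.fromBlocks H₁₁ H₁₂ 0 H₂₂))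
    (hEt : E.mulVec t = fun i => Fin.append s₁ s₂ ((finCongr hp).symm i))
    (a : Fin q₁ → K) (b : Fin q₂ → K) :
    (H₁.mulVec a + H₂.mulVec b = sbar ∧ v ⬝ᵥ a = 1) ↔
      (H₁₁.mulVec a + H₁₂.mulVec b = s₁ ∧ H₂₂.mulVec b = s₂) := by
  have hBab : B.mulVec (Fin.append a b) =
      Fin.append (H₁.mulVec a + H₂.mulVec b) (fun _ : Fin 1 => v ⬝ᵥ a) := by
    have h := reindex_fromBlocks_mulVec_append rfl H₁ H₂
      (Matrix.of fun (_ : Fin 1) j => v j) 0 a b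
    rw [Matrix.zero_mulVec, add_zero] at h
    rw [hB]
    exact h
  have hEBab : E.mulVec (B.mulVec (Fin.append a b)) = fun i =>
      Fin.append (H₁₁.mulVec a + H₁₂.mulVec b) (H₂₂.mulVec b) ((finCongr hp).symm i) := by
    rw [Matrix.mulVec_mulVec, hEB, reindex_fromBlocks_mulVec_append, Matrix.zero_mulVec, zero_add]
  have horig : B.mulVec (Fin.append a b) = t ↔
      (H₁.mulVec a + H₂.mulVec b = sbar ∧ v ⬝ᵥ a = 1) := by
    rw [hBab, ht, append_eq_append_iff]
    simp [funext_iff]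
  have hred : E.mulVec (B.mulVec (Fin.append a b)) = E.mulVec t ↔
      (H₁₁.mulVec a + H₁₂.mulVec b = s₁ ∧ H₂₂.mulVec b = s₂) := by
    rw [hEBab, hEt, ← append_eq_append_iff]
    exact (finCongr hp).symm.surjective.injective_comp_right.eq_iff
  rw [← horig, ← hred]
  exact (Matrix.mulVec_injective_of_isUnit hE).eq_iff.symm

/-- Under the reduction hypotheses, a solution `(a, b)` of the
combined system (recurrence relations plus the inversion condition `v ⬝ᵥ a = 1`)
exists iff `rank H₂₂ = rank [H₂₂ | s̄₂]`; moreover every solution `b` of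
`H₂₂ b = s̄₂` extends by some `a` to a solution of the combined system. -/
theorem stmt_2 (p q₁ q₂ p₁ p₂ : ℕ) (hp : p₁ + p₂ = p + 1)
    (H₁ : Matrix (Fin p) (Fin q₁) (ZMod 2)) (H₂ : Matrix (Fin p) (Fin q₂) (ZMod 2))
    (v : Fin q₁ → ZMod 2) (sbar : Fin p → ZMod 2)
    (H₁₁ : Matrix (Fin p₁) (Fin q₁) (ZMod 2)) (H₁₂ : Matrix (Fin p₁) (Fin q₂) (ZMod 2))
    (H₂₂ : Matrix (Fin p₂) (Fin q₂) (ZMod 2))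
    (s₁ : Fin p₁ → ZMod 2) (s₂ : Fin p₂ → ZMod 2)
    (B : Matrix (Fin (p + 1)) (Fin (q₁ + q₂)) (ZMod 2))
    (hB : B = Matrix.reindex finSumFinEquiv finSumFinEquiv
      (Matrix.fromBlocks H₁ H₂ (Matrix.of fun (_ : Fin 1) j => v j) 0))
    (t : Fin (p + 1) → ZMod 2)
    (ht : t = Fin.append sbar (fun _ : Fin 1 => (1 : ZMod 2)))
    (E : Matrix (Fin (p + 1)) (Fin (p + 1)) (ZMod 2)) (hE : IsUnit E)
    (hEB : E * B = Matrix.reindex (finSumFinEquiv.trans (finCongr hp)) finSumFinEquiv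
      (Matrix.fromBlocks H₁₁ H₁₂ 0 H₂₂))
    (hEt : E.mulVec t = fun i => Fin.append s₁ s₂ ((finCongr hp).symm i))
    (hrank : H₁₁.rank = p₁) :
    ((∃ (a : Fin q₁ → ZMod 2) (b : Fin q₂ → ZMod 2),
        H₁.mulVec a + H₂.mulVec b = sbar ∧ v ⬝ᵥ a = 1) ↔
      H₂₂.rank = (Matrix.of fun i : Fin p₂ => Fin.snoc (H₂₂ i) (s₂ i) :
        Matrix (Fin p₂) (Fin (q₂ + 1)) (ZMod 2)).rank) ∧
    (∀ b : Fin q₂ → ZMod 2, H₂₂.mulVec b = s₂ →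
      ∃ a : Fin q₁ → ZMod 2, H₁.mulVec a + H₂.mulVec b = sbar ∧ v ⬝ᵥ a = 1) := by
  have key := system_iff_reduced p q₁ q₂ p₁ p₂ hp H₁ H₂ v sbar H₁₁ H₁₂ H₂₂ s₁ s₂ B hB t ht E hE
    hEB hEt
  have hext : ∀ b : Fin q₂ → ZMod 2, H₂₂.mulVec b = s₂ →
      ∃ a : Fin q₁ → ZMod 2, H₁.mulVec a + H₂.mulVec b = sbar ∧ v ⬝ᵥ a = 1 := by
    intro b hb
    obtain ⟨a, ha⟩ := mulVec_surjective_of_rank_eq H₁₁ hrank (s₁ - H₁₂.mulVec b)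
    exact ⟨a, (key a b).mpr ⟨by rw [ha, sub_add_cancel], hb⟩⟩
  refine ⟨?_, hext⟩
  rw [← exists_mulVec_eq_iff_rank_eq]
  constructor
  · rintro ⟨a, b, hab⟩
    exact ⟨b, ((key a b).mp hab).2⟩
  · rintro ⟨b, hb⟩
    obtain ⟨a, ha⟩ := hext b hb
    exact ⟨a, b, ha⟩
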